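/- Let r be even. For all π₁, π₂ ∈ G(r,n) and every absolute involution w ∈ I_{r,n}, sign_e(π₂π₁, w) = sign_e(π₁, w) · sign_e(π₂, π₁ w π₁ᵗ). -/

import Mathlib

open Finset CategoryTheory

/-- The wreath product `ℤ_r ≀ S_n`: elements are pairs `(σ, z)` with
`σ` a permutation of `{1,…,n}` and `z ∈ (ℤ/rℤ)^n`.  The multiplication is
`(σ,c)·(τ,d) = (στ, (c_{τ⁻¹(i)} + d_i)_i)`, where in the paper's convention
permutations compose left-to-right; translated to Lean's convention
(`(σ * τ) x = σ (τ x)`) this reads `(σ,c)·(τ,d) = (σ * τ, fun i => c (τ i) + d i)`,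
i.e. the semidirect product of `Fin n → ZMod r` by `Equiv.Perm (Fin n)`
acting by permuting coordinates. -/
def Wreath (r n : ℕ) : Type := Equiv.Perm (Fin n) × (Fin n → ZMod r)

namespace Wreath

variable {r n : ℕ}

instance : Group (Wreath r n) where
  mul v w := ⟨v.1 * w.1, fun i => v.2 (w.1 i) + w.2 i⟩
  one := ⟨1, 0⟩
  inv v := ⟨v.1⁻¹, fun i => -v.2 (v.1⁻¹ i)⟩
  mul_assoc a b c := Prod.ext (mul_assoc _ _ _) (funext fun i => add_assoc _ _ _)
  one_mul a := by
    refine Prod.ext (one_mul _) (funext fun i => ?_)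
    show (0 : Fin n → ZMod r) (a.1 i) + a.2 i = a.2 i
    simp
  mul_one a := by
    refine Prod.ext (mul_one _) (funext fun i => ?_)
    show a.2 ((1 : Equiv.Perm (Fin n)) i) + (0 : Fin n → ZMod r) i = a.2 i
    simp
  inv_mul_cancel a := by
    refine Prod.ext (inv_mul_cancel _) (funext fun i => ?_)
    show -a.2 (a.1⁻¹ (a.1 i)) + a.2 i = (0 : Fin n → ZMod r) i
    simp

instance [NeZero r] : Fintype (Wreath r n) :=
  inferInstanceAs (Fintype (Equiv.Perm (Fin n) × (Fin n → ZMod r)))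

instance : DecidableEq (Wreath r n) :=
  inferInstanceAs (DecidableEq (Equiv.Perm (Fin n) × (Fin n → ZMod r)))

theorem mul_def (v w : Wreath r n) :
    v * w = ⟨v.1 * w.1, fun i => v.2 (w.1 i) + w.2 i⟩ := rfl

theorem one_def : (1 : Wreath r n) = ⟨1, 0⟩ := rfl

theorem inv_def (v : Wreath r n) : v⁻¹ = ⟨v.1⁻¹, fun i => -v.2 (v.1⁻¹ i)⟩ := rfl

/-- The bar operation `(σ, z) ↦ (σ, −z)`. -/
def bar (v : Wreath r n) : Wreath r n := ⟨v.1, -v.2⟩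

theorem bar_mul (v w : Wreath r n) : bar (v * w) = bar v * bar w := by
  refine Prod.ext rfl (funext fun i => ?_)
  show -(v.2 (w.1 i) + w.2 i) = -v.2 (w.1 i) + -w.2 i
  ring

theorem bar_bar (v : Wreath r n) : bar (bar v) = v := by
  refine Prod.ext rfl ?_
  show - - v.2 = v.2
  simp

/-- `bar` as a group automorphism. -/
def barAut : Wreath r n ≃* Wreath r n where
  toFun := bar
  invFun := bar
  left_inv := bar_bar
  right_inv := bar_bar
  map_mul' := bar_mul

theorem bar_inv (v : Wreath r n) : bar v⁻¹ = (bar v)⁻¹ :=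
  map_inv (barAut : Wreath r n ≃* Wreath r n) v

/-- `vᵗ := (v̄)⁻¹`. -/
def tr (v : Wreath r n) : Wreath r n := (bar v)⁻¹

/-- Conjugation `w ↦ π w πᵗ` maps absolute involutions to absolute involutions. -/
theorem conj_absInv {w : Wreath r n} (hw : w * bar w = 1) (π : Wreath r n) :
    (π * w * tr π) * bar (π * w * tr π) = 1 := by
  have h1 : bar (π * w * tr π) = bar π * bar w * π⁻¹ := by
    rw [bar_mul, bar_mul, tr, bar_inv, bar_bar]
  calc (π * w * tr π) * bar (π * w * tr π)
      = π * (w * bar w) * π⁻¹ := by rw [h1, tr]; group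
    _ = 1 := by rw [hw]; group

end Wreath

/-- The set of inversions of `σ`, encoded as ordered pairs `(i,j)` with `i < j`
and `σ j < σ i` (one representative for each unordered pair `{i,j}` with
`(j−i)(σ(j)−σ(i)) < 0`). -/
def invPairs {n : ℕ} (σ : Equiv.Perm (Fin n)) : Finset (Fin n × Fin n) :=
  Finset.univ.filter fun p => p.1 < p.2 ∧ σ p.2 < σ p.1

/-- The 2-cycles of an involution `u`, encoded as ordered pairs `(i,j)` with `i < j`,
`u i = j` and `u j = i` (one representative for each unordered pair `{i,j}`). -/
def pairSet {n : ℕ} (u : Equiv.Perm (Fin n)) : Finset (Fin n × Fin n) :=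
  Finset.univ.filter fun p => p.1 < p.2 ∧ u p.1 = p.2 ∧ u p.2 = p.1

/-- `sign_o(π,w) := (−1)^{#(Inv(|π|) ∩ Pair(|w|))}`. -/
def signO {r n : ℕ} (π w : Wreath r n) : ℤ :=
  (-1) ^ ((invPairs π.1 ∩ pairSet w.1).card)

/-- A family of finite-dimensional complex representations forming a complete set of
pairwise non-isomorphic irreducible representations of `G`. -/
def IsCompleteIrrFamily {G : Type} [Monoid G] {ι : Type} (V : ι → FDRep ℂ G) : Prop :=
  (∀ i, Simple (V i)) ∧ (∀ i j, Nonempty (V i ≅ V j) → i = j) ∧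
    ∀ W : FDRep ℂ G, Simple W → ∃ i, Nonempty (V i ≅ W)

/-- `B(π,w)` (for even `r`): the set of indices `i` with `|w|(i) = i`,
`z_w(i) = 2k+1` odd with `k ∈ {0,…,r/2−1}`, and `k + z_π(i) ∈ {r/2,…,r−1}`
(computed in `ℤ/rℤ`, identified with `{0,…,r−1}` via `ZMod.val`). -/
noncomputable def Bset {r n : ℕ} (π w : Wreath r n) : Finset (Fin n) := by
  classical exact Finset.univ.filter fun i => w.1 i = i ∧ ∃ k ∈ Finset.range (r / 2),
    (w.2 i).val = 2 * k + 1 ∧ r / 2 ≤ (((k : ℕ) : ZMod r) + π.2 i).val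

/-- `sign_e(π,w) := (−1)^{#B(π,w)} · (−1)^{#(Inv(|π|) ∩ Pair(|w|))}`. -/
noncomputable def signE {r n : ℕ} (π w : Wreath r n) : ℤ :=
  (-1) ^ (Bset π w).card * (-1) ^ ((invPairs π.1 ∩ pairSet w.1).card)

/-!
Each of the two factors of `signE` is a product of local signs that form a cocycle.

An index `i` fixed by `|w|` with `z_w(i) = 2k + 1` contributes `halfSign (k + z_π(i))`, the sign of
`k + z_π(i)` being `-1` on the upper half of `ℤ/rℤ`. Conjugating by `π₁` moves `i` to `|π₁|(i)` and
replaces `k` by the residue `k'` of `k + z_π₁(i)` modulo `r/2`. So `k + z_π₁(i)` is `k'` or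
`k' + r/2`, according to its own sign; as `halfSign` is antiperiodic with antiperiod `r/2`,
`halfSign (k + z_π₁(i) + y) = halfSign (k + z_π₁(i)) * halfSign (k' + y)`.

A 2-cycle `{i, j}` contributes `-1` when `|π|` inverts it, and `|π₂||π₁|` inverts `{i, j}` exactly
when one but not both of `|π₁|` on `{i, j}` and `|π₂|` on `{|π₁|(i), |π₁|(j)}` do.
-/

section HalfSign

variable {r : ℕ}

/-- The sign that is `-1` on the upper half `{r/2, …, r-1}` of `ℤ/rℤ` and `1` on the lower half;
it detects the condition on `k + z_π(i)` in `Bset`. -/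
def halfSign (x : ZMod r) : ℤ :=
  if r / 2 ≤ x.val then -1 else 1

theorem halfSign_add_half [NeZero r] (hr : Even r) (x : ZMod r) :
    halfSign (x + ((r / 2 : ℕ) : ZMod r)) = -halfSign x := by
  have hpos : 0 < r := NeZero.pos r
  have htwo : 2 * (r / 2) = r := Nat.two_mul_div_two_of_even hr
  have hhalf : ((r / 2 : ℕ) : ZMod r).val = r / 2 := ZMod.val_natCast_of_lt (by lia)
  have hx : x.val < r := x.val_lt
  rcases lt_or_ge x.val (r / 2) with hlt | hge
  · have hval : (x + ((r / 2 : ℕ) : ZMod r)).val = x.val + r / 2 := by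
      rw [ZMod.val_add_of_lt (by lia), hhalf]
    rw [halfSign, halfSign, if_pos (by lia), if_neg (by lia)]
  · have hval : (x + ((r / 2 : ℕ) : ZMod r)).val = x.val + r / 2 - r := by
      rw [ZMod.val_add_of_le (by lia), hhalf]
    rw [halfSign, halfSign, if_neg (by lia), if_pos hge, neg_neg]

theorem halfSign_add [NeZero r] (hr : Even r) (x y : ZMod r) :
    halfSign (x + y) = halfSign x * halfSign (((x.val % (r / 2) : ℕ) : ZMod r) + y) := by
  have htwo : 2 * (r / 2) = r := Nat.two_mul_div_two_of_even hr
  have hx : x.val < r := x.val_lt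
  rcases lt_or_ge x.val (r / 2) with hlt | hge
  · have hsign : halfSign x = 1 := if_neg hlt.not_ge
    rw [hsign, one_mul, Nat.mod_eq_of_lt hlt, ZMod.natCast_zmod_val]
  · have hsign : halfSign x = -1 := if_pos hge
    have hmod : x.val = x.val % (r / 2) + r / 2 := by
      rw [Nat.mod_eq_sub_mod hge, Nat.mod_eq_of_lt (by lia), Nat.sub_add_cancel hge]
    have hsplit : x = ((x.val % (r / 2) : ℕ) : ZMod r) + ((r / 2 : ℕ) : ZMod r) := by
      rw [← Nat.cast_add, ← hmod, ZMod.natCast_zmod_val]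
    calc halfSign (x + y)
        = halfSign (((x.val % (r / 2) : ℕ) : ZMod r) + y + ((r / 2 : ℕ) : ZMod r)) := by
          conv_lhs => rw [hsplit, add_right_comm]
      _ = halfSign x * halfSign (((x.val % (r / 2) : ℕ) : ZMod r) + y) := by
          rw [halfSign_add_half hr, hsign, neg_one_mul]

theorem odd_val_add_two_mul_iff [NeZero r] (hr : Even r) (a t : ZMod r) :
    Odd (a + 2 * t).val ↔ Odd a.val := by
  rw [two_mul, ← add_assoc, ZMod.val_add, ZMod.val_add, Nat.mod_add_mod, Nat.odd_iff, Nat.odd_iff,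
    Nat.mod_mod_of_dvd _ hr.two_dvd]
  lia

theorem val_add_two_mul_div_two [NeZero r] (hr : Even r) (a t : ZMod r) :
    (a + 2 * t).val / 2 = (((a.val / 2 : ℕ) : ZMod r) + t).val % (r / 2) := by
  obtain ⟨m, rfl⟩ := hr.two_dvd
  have hlhs : (a + 2 * t).val = (a.val + 2 * t.val) % (2 * m) := by
    rw [two_mul t, two_mul t.val, ← add_assoc, ← add_assoc, ZMod.val_add, ZMod.val_add,
      Nat.mod_add_mod]
  have hrhs : (((a.val / 2 : ℕ) : ZMod (2 * m)) + t).val = (a.val / 2 + t.val) % (2 * m) := by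
    rw [ZMod.val_add, ZMod.val_natCast, Nat.mod_add_mod]
  rw [hlhs, hrhs, Nat.mul_div_cancel_left m two_pos, Nat.mod_mul_right_div_self,
    Nat.add_mul_div_left _ _ two_pos, Nat.mod_mul_left_mod]

/-- The sign contributed to `(-1) ^ #(Bset π w)` by an index `i` fixed by `|w|`, where
`a = z_w(i)` and `t = z_π(i)`. -/
def fixedSign (a t : ZMod r) : ℤ :=
  if Odd a.val then halfSign (((a.val / 2 : ℕ) : ZMod r) + t) else 1

theorem fixedSign_add [NeZero r] (hr : Even r) (a t s : ZMod r) :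
    fixedSign a (t + s) = fixedSign a t * fixedSign (a + 2 * t) s := by
  simp only [fixedSign, odd_val_add_two_mul_iff hr, val_add_two_mul_div_two hr]
  split_ifs
  · rw [← add_assoc, halfSign_add hr]
  · rw [one_mul]

end HalfSign

namespace Wreath

variable {r n : ℕ}

theorem fst_mul (v w : Wreath r n) : (v * w).1 = v.1 * w.1 := rfl

theorem snd_mul_apply (v w : Wreath r n) (i : Fin n) : (v * w).2 i = v.2 (w.1 i) + w.2 i := rfl

theorem fst_conj (π w : Wreath r n) : (π * w * tr π).1 = π.1 * w.1 * π.1⁻¹ := rfl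

theorem snd_tr_apply (π : Wreath r n) (i : Fin n) : (tr π).2 (π.1 i) = π.2 i := by
  calc (tr π).2 (π.1 i) = - -π.2 (π.1⁻¹ (π.1 i)) := rfl
    _ = π.2 i := by simp

theorem snd_conj_apply (π w : Wreath r n) (i : Fin n) :
    (π * w * tr π).2 (π.1 i) = π.2 (w.1 i) + w.2 i + π.2 i := by
  have hfst : (tr π).1 (π.1 i) = i := π.1.symm_apply_apply i
  rw [snd_mul_apply, snd_tr_apply, hfst, snd_mul_apply]

end Wreath

section FixedPoints

variable {r n : ℕ}

theorem mem_Bset [NeZero r] {π w : Wreath r n} {i : Fin n} :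
    i ∈ Bset π w ↔ w.1 i = i ∧ Odd (w.2 i).val ∧
      r / 2 ≤ ((((w.2 i).val / 2 : ℕ) : ZMod r) + π.2 i).val := by
  simp only [Bset, mem_filter_univ, mem_range]
  refine and_congr_right fun _ => ⟨?_, ?_⟩
  · rintro ⟨k, -, hval, hle⟩
    have hk : (w.2 i).val / 2 = k := by lia
    exact ⟨⟨k, hval⟩, hk ▸ hle⟩
  · rintro ⟨hodd, hle⟩
    have hlt : (w.2 i).val < r := ZMod.val_lt _
    have hval : (w.2 i).val = 2 * ((w.2 i).val / 2) + 1 :=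
      (Nat.two_mul_div_two_add_one_of_odd hodd).symm
    exact ⟨(w.2 i).val / 2, by lia, hval, hle⟩

theorem neg_one_pow_card_Bset [NeZero r] (π w : Wreath r n) :
    (-1 : ℤ) ^ #(Bset π w) = ∏ i with w.1 i = i, fixedSign (w.2 i) (π.2 i) := by
  have hfilter : Bset π w = {i ∈ univ.filter fun i => w.1 i = i | Odd (w.2 i).val ∧
      r / 2 ≤ ((((w.2 i).val / 2 : ℕ) : ZMod r) + π.2 i).val} := by
    ext i
    rw [mem_Bset, mem_filter, mem_filter_univ]
  rw [hfilter, ← prod_const, prod_filter]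
  exact prod_congr rfl fun i _ => ite_and ..

theorem neg_one_pow_card_Bset_mul [NeZero r] (hr : Even r) (π₁ π₂ w : Wreath r n) :
    (-1 : ℤ) ^ #(Bset (π₂ * π₁) w) =
      (-1) ^ #(Bset π₁ w) * (-1) ^ #(Bset π₂ (π₁ * w * Wreath.tr π₁)) := by
  have hreindex : ∏ i with w.1 i = i, fixedSign (w.2 i + 2 * π₁.2 i) (π₂.2 (π₁.1 i)) =
      ∏ i with (π₁ * w * Wreath.tr π₁).1 i = i,
        fixedSign ((π₁ * w * Wreath.tr π₁).2 i) (π₂.2 i) := by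
    refine prod_equiv π₁.1 (fun i => ?_) fun i hi => ?_
    · rw [mem_filter_univ, mem_filter_univ, Wreath.fst_conj]
      simp
    · rw [Wreath.snd_conj_apply, (mem_filter.mp hi).2, two_mul, add_right_comm, add_comm]
  simp only [neg_one_pow_card_Bset]
  rw [← hreindex, ← prod_mul_distrib]
  refine prod_congr rfl fun i _ => ?_
  rw [Wreath.snd_mul_apply, add_comm, fixedSign_add hr]

end FixedPoints

section TwoCycles

/-- The sign `-1` for an unordered pair belonging to `Inv(σ)` and `1` for any other. -/
def invSign {α : Type*} [LinearOrder α] (σ : Equiv.Perm α) : Sym2 α → ℤ :=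
  Sym2.lift ⟨fun i j => if (i < j ∧ σ j < σ i) ∨ (j < i ∧ σ i < σ j) then -1 else 1,
    fun _ _ => by simp only [or_comm]⟩

theorem invSign_mul {α : Type*} [LinearOrder α] (τ σ : Equiv.Perm α) (s : Sym2 α) :
    invSign (τ * σ) s = invSign σ s * invSign τ (s.map σ) := by
  induction s with | _ i j
  have hσ : σ i = σ j ↔ i = j := σ.injective.eq_iff
  have hτ : τ (σ i) = τ (σ j) ↔ σ i = σ j := τ.injective.eq_iff
  simp only [invSign, Sym2.map_mk, Sym2.lift_mk, Equiv.Perm.mul_apply]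
  grind

variable {n : ℕ}

/-- The set `Pair(u)` of 2-cycles of `u`, as unordered pairs; on these, unlike on the ordered pairs
of `pairSet`, a permutation acts without reordering. -/
def twoCycles (u : Equiv.Perm (Fin n)) : Finset (Sym2 (Fin n)) :=
  (pairSet u).image fun p => s(p.1, p.2)

theorem mk_mem_twoCycles {u : Equiv.Perm (Fin n)} {i j : Fin n} :
    s(i, j) ∈ twoCycles u ↔ i ≠ j ∧ u i = j ∧ u j = i := by
  simp only [twoCycles, pairSet, mem_image, mem_filter_univ, Prod.exists, Sym2.eq_iff]
  grind

theorem twoCycles_conj (σ u : Equiv.Perm (Fin n)) :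
    twoCycles (σ * u * σ⁻¹) = (twoCycles u).map σ.toEmbedding.sym2Map := by
  ext s
  induction s with | _ i j
  obtain ⟨i, rfl⟩ := σ.surjective i
  obtain ⟨j, rfl⟩ := σ.surjective j
  have hmap : s(σ i, σ j) = σ.toEmbedding.sym2Map s(i, j) := rfl
  rw [mk_mem_twoCycles, hmap, mem_map', mk_mem_twoCycles]
  simp

theorem prod_twoCycles {M : Type*} [CommMonoid M] (u : Equiv.Perm (Fin n)) (f : Sym2 (Fin n) → M) :
    ∏ s ∈ twoCycles u, f s = ∏ p ∈ pairSet u, f s(p.1, p.2) := by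
  refine prod_image fun p hp q hq hpq => ?_
  have hp' : p.1 < p.2 := (mem_filter.mp hp).2.1
  have hq' : q.1 < q.2 := (mem_filter.mp hq).2.1
  rcases Sym2.eq_iff.mp hpq with ⟨h₁, h₂⟩ | ⟨h₁, h₂⟩
  · exact Prod.ext h₁ h₂
  · exact absurd hq' (h₁ ▸ h₂ ▸ hp').asymm

theorem neg_one_pow_card_invPairs_inter_pairSet (σ u : Equiv.Perm (Fin n)) :
    (-1 : ℤ) ^ #(invPairs σ ∩ pairSet u) = ∏ s ∈ twoCycles u, invSign σ s := by
  have hfilter : invPairs σ ∩ pairSet u = {p ∈ pairSet u | σ p.2 < σ p.1} := by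
    ext p
    simp only [invPairs, pairSet, mem_inter, mem_filter, mem_univ]
    tauto
  rw [hfilter, ← prod_const, prod_filter, prod_twoCycles]
  refine prod_congr rfl fun p hp => ?_
  have hlt : p.1 < p.2 := (mem_filter.mp hp).2.1
  simp only [invSign, Sym2.lift_mk, hlt, hlt.not_gt, true_and, false_and, or_false]

theorem neg_one_pow_card_invPairs_mul_inter_pairSet (τ σ u : Equiv.Perm (Fin n)) :
    (-1 : ℤ) ^ #(invPairs (τ * σ) ∩ pairSet u) =
      (-1) ^ #(invPairs σ ∩ pairSet u) * (-1) ^ #(invPairs τ ∩ pairSet (σ * u * σ⁻¹)) := by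
  have hreindex : ∏ s ∈ twoCycles (σ * u * σ⁻¹), invSign τ s =
      ∏ s ∈ twoCycles u, invSign τ (s.map σ) := by
    rw [twoCycles_conj, prod_map]
    rfl
  simp only [neg_one_pow_card_invPairs_inter_pairSet, invSign_mul, prod_mul_distrib, hreindex]

end TwoCycles

theorem signE_mul_general {r n : ℕ} [NeZero r] (hr : Even r) (π₁ π₂ w : Wreath r n) :
    signE (π₂ * π₁) w = signE π₁ w * signE π₂ (π₁ * w * Wreath.tr π₁) := by
  rw [signE, signE, signE, neg_one_pow_card_Bset_mul hr, Wreath.fst_mul, Wreath.fst_conj,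
    neg_one_pow_card_invPairs_mul_inter_pairSet, mul_mul_mul_comm]

/-- **Multiplicativity of `sign_e`** (Part 1 of the proof of Theorem `t.model` for even
`r`): for all `π₁, π₂ ∈ G(r,n)` and every absolute involution `w`,
`sign_e(π₂π₁, w) = sign_e(π₁, w) · sign_e(π₂, π₁ w π₁ᵗ)`. -/
theorem signE_mul
    (r n : ℕ) [NeZero r] (hn : 0 < n) (hr : Even r) (π₁ π₂ w : Wreath r n)
    (hw : w * Wreath.bar w = 1) :
    signE (π₂ * π₁) w = signE π₁ w * signE π₂ (π₁ * w * Wreath.tr π₁) :=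
  signE_mul_general hr π₁ π₂ w
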